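/- The Riccati-type inner equation dη̄/dū = 1/(η̄ + ū²) has a unique solution η̄₀(ū) defined on an interval (−∞, ū₁) that approaches the parabola η̄ = −ū² as ū → −∞; more precisely there is a unique solution satisfying η̄₀(ū) + ū² → 0 as ū → −∞, and it has the asymptotic expansion η̄₀(ū) = −ū² − 1/(2ū) − 1/(8ū⁴) + O(1/ū⁷) as ū → −∞. -/

import Mathlib

open Set Filter Topology

noncomputable def lowB (u : ℝ) : ℝ := -1 / (2 * u) - 1 / (8 * u ^ 4)

noncomputable def uppB (u : ℝ) : ℝ := lowB u - 1 / u ^ 7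

lemma lowB_deriv {u : ℝ} (hu : u ≤ -1) :
    HasDerivAt lowB (1 / (2 * u ^ 2) + 1 / (2 * u ^ 5)) u := by
  have h0 : u ≠ 0 := by linarith
  have h1 : HasDerivAt (fun x : ℝ => 2 * x) (2 * 1) u := (hasDerivAt_id u).const_mul 2
  have h2 : HasDerivAt (fun x : ℝ => 8 * x ^ 4) (8 * (4 * u ^ 3)) u := by
    simpa using (hasDerivAt_pow 4 u).const_mul 8
  have h3 := ((hasDerivAt_const u (-1 : ℝ)).fun_div h1 (by simpa using h0)).fun_sub
    ((hasDerivAt_const u (1 : ℝ)).fun_div h2 (by positivity))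
  refine HasDerivAt.congr_deriv h3 ?_
  field_simp
  ring

lemma uppB_deriv {u : ℝ} (hu : u ≤ -1) :
    HasDerivAt uppB (1 / (2 * u ^ 2) + 1 / (2 * u ^ 5) + 7 / u ^ 8) u := by
  have h0 : u ≠ 0 := by linarith
  have h2 : HasDerivAt (fun x : ℝ => x ^ 7) (7 * u ^ 6) u := by
    simpa using (hasDerivAt_pow 7 u)
  have h3 := (lowB_deriv hu).fun_sub
    ((hasDerivAt_const u (1 : ℝ)).fun_div h2 (pow_ne_zero 7 h0))
  refine HasDerivAt.congr_deriv h3 ?_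
  field_simp
  ring

lemma lowB_ge {u : ℝ} (hu : u ≤ -1) : 1 / (4 * (-u)) ≤ lowB u := by
  obtain ⟨s, rfl⟩ : ∃ s, u = -s := ⟨-u, by ring⟩
  have hs : 1 ≤ s := by linarith
  have h3 : 1 ≤ s ^ 3 := one_le_pow₀ hs
  have : lowB (-s) - 1 / (4 * (- -s)) = (2 * s ^ 3 - 1) / (8 * s ^ 4) := by
    unfold lowB
    have : s ≠ 0 := by linarith
    field_simp
    ring
  have h4 : 0 ≤ (2 * s ^ 3 - 1) / (8 * s ^ 4) := div_nonneg (by linarith) (by positivity)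
  linarith

lemma lowB_pos {u : ℝ} (hu : u ≤ -1) : 0 < lowB u :=
  lt_of_lt_of_le (by have : 0 < -u := by linarith
                     positivity) (lowB_ge hu)

lemma lowB_lt {u : ℝ} (hu : u ≤ -1) :
    1 / (2 * u ^ 2) + 1 / (2 * u ^ 5) < 1 / lowB u + 2 * u := by
  have hp := lowB_pos hu
  obtain ⟨s, rfl⟩ : ∃ s, u = -s := ⟨-u, by ring⟩
  have hs : 1 ≤ s := by linarith
  have h3 : 1 ≤ s ^ 3 := one_le_pow₀ hs
  have hs0 : s ≠ 0 := by linarith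
  have e : lowB (-s) = (4 * s ^ 3 - 1) / (8 * s ^ 4) := by
    unfold lowB
    field_simp
    ring
  have h4 : 0 < 4 * s ^ 3 - 1 := by linarith
  have h4' := h4.ne'
  rw [e, ← sub_pos]
  have : 1 / ((4 * s ^ 3 - 1) / (8 * s ^ 4)) + 2 * -s - (1 / (2 * (-s) ^ 2) + 1 / (2 * (-s) ^ 5))
     = (5 * s ^ 3 - 1) / (2 * s ^ 5 * (4 * s ^ 3 - 1)) := by
    rw [show (-s) ^ 5 = - s ^ 5 by ring]
    field_simp
    ring
  rw [this]
  exact div_pos (by linarith) (by positivity)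

lemma uppB_eq (s : ℝ) : uppB (-s) = lowB (-s) + 1 / s ^ 7 := by
  unfold uppB
  rw [show (-s) ^ 7 = - s ^ 7 by ring, div_neg]
  ring

lemma lowB_le_uppB {u : ℝ} (hu : u ≤ -1) : lowB u ≤ uppB u := by
  obtain ⟨s, rfl⟩ : ∃ s, u = -s := ⟨-u, by ring⟩
  have hs : 0 < s := by linarith
  rw [uppB_eq]
  have : 0 < 1 / s ^ 7 := by positivity
  linarith

lemma uppB_lt {u : ℝ} (hu : u ≤ -1) :
    1 / uppB u + 2 * u < 1 / (2 * u ^ 2) + 1 / (2 * u ^ 5) + 7 / u ^ 8 := by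
  obtain ⟨s, rfl⟩ : ∃ s, u = -s := ⟨-u, by ring⟩
  have hs : 1 ≤ s := by linarith
  have h3 : 1 ≤ s ^ 3 := one_le_pow₀ hs
  have hs0 : s ≠ 0 := by linarith
  have e : uppB (-s) = (4 * s ^ 6 - s ^ 3 + 8) / (8 * s ^ 7) := by
    rw [uppB_eq]
    unfold lowB
    field_simp
    ring
  have h4 : 0 < 4 * s ^ 6 - s ^ 3 + 8 := by nlinarith
  have h4' := h4.ne'
  rw [e, ← sub_pos]
  have : (1 / (2 * (-s) ^ 2) + 1 / (2 * (-s) ^ 5) + 7 / (-s) ^ 8) -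
      (1 / ((4 * s ^ 6 - s ^ 3 + 8) / (8 * s ^ 7)) + 2 * -s)
     = (27 * s ^ 9 + 65 * s ^ 6 - 22 * s ^ 3 + 112) / (2 * s ^ 8 * (4 * s ^ 6 - s ^ 3 + 8)) := by
    rw [show (-s) ^ 5 = - s ^ 5 by ring, show (-s) ^ 8 = s ^ 8 by ring,
      show (-s) ^ 2 = s ^ 2 by ring, one_div_div]
    generalize hX : 4 * s ^ 6 - s ^ 3 + 8 = X at h4'
    field_simp
    rw [← hX]
    ring
  rw [this]
  have h9 : 0 < s ^ 9 := by positivity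
  exact div_pos (by nlinarith) (by positivity)

/-- the approximate solutions -/
lemma exists_approx (T : ℝ) (hT : 1 < T) : ∃ w : ℝ → ℝ,
    (∀ u ∈ Icc (-T) (-1), HasDerivWithinAt w (1 / w u + 2 * u) (Icc (-T) (-1)) u) ∧
    (∀ u ∈ Icc (-T) (-1), lowB u ≤ w u ∧ w u ≤ uppB u) := by
  have hT0 : 0 < T := by linarith
  set c : ℝ := 1 / (4 * T) with hc
  have hc0 : 0 < c := by positivity
  have hic : 1 / c = 4 * T := by rw [hc]; field_simp
  let f : ℝ → ℝ → ℝ := fun t x => 1 / max x c + 2 * t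
  have hm : ∀ x, 0 < max x c := fun x => lt_of_lt_of_le hc0 (le_max_right _ _)
  have hcA : ∀ u ∈ Icc (-T) (-1), c ≤ lowB u := by
    intro u hu
    refine le_trans ?_ (lowB_ge hu.2)
    have : 0 < -u := by linarith [hu.2]
    rw [hc]
    apply one_div_le_one_div_of_le (by positivity)
    linarith [hu.1]
  have hL1 : ((6 * T * T).toNNReal : ℝ) = 6 * T * T := Real.coe_toNNReal _ (by positivity)
  have hL2 : ((6 * T).toNNReal : ℝ) = 6 * T := Real.coe_toNNReal _ (by positivity)
  have hL3 : ((1 / c ^ 2).toNNReal : ℝ) = 1 / c ^ 2 := Real.coe_toNNReal _ (by positivity)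
  have hPL : IsPicardLindelof f (tmin := -T) (tmax := -1) ⟨-T, by constructor <;> linarith⟩
      (lowB (-T)) (6 * T * T).toNNReal 0 (6 * T).toNNReal
      (1 / c ^ 2).toNNReal := by
    constructor
    · intro t ht
      apply LipschitzWith.lipschitzOnWith
      apply LipschitzWith.of_dist_le_mul
      intro x y
      simp only [f, Real.dist_eq, hL3]
      have e : 1 / max x c + 2 * t - (1 / max y c + 2 * t)
          = (max y c - max x c) / (max x c * max y c) := by
        have := (hm x).ne'
        have := (hm y).ne'
        field_simp
        ring
      rw [e, abs_div, abs_of_pos (mul_pos (hm x) (hm y)), div_eq_mul_one_div, mul_comm]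
      apply mul_le_mul
      · apply one_div_le_one_div_of_le (by positivity)
        rw [sq]
        exact mul_le_mul (le_max_right _ _) (le_max_right _ _) hc0.le (hm x).le
      · rw [abs_sub_comm]
        exact abs_max_sub_max_le_abs x y c
      · positivity
      · positivity
    · intro x _
      simp only [f]
      fun_prop
    · intro t ht x _
      have h1 : 1 / max x c ≤ 4 * T := by
        rw [← hic]
        exact one_div_le_one_div_of_le hc0 (le_max_right _ _)
      have h2 : 0 < 1 / max x c := one_div_pos.2 (hm x)
      simp only [f, Real.norm_eq_abs, hL2]
      rw [abs_le]
      constructor <;> linarith [ht.1, ht.2]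
    · simp only [hL1, hL2, NNReal.coe_zero]
      rw [max_eq_left (by linarith)]
      nlinarith
  obtain ⟨w, hw0, hw⟩ := hPL.exists_eq_forall_mem_Icc_hasDerivWithinAt₀
  simp only at hw0
  have hwc : ContinuousOn w (Icc (-T) (-1)) := fun u hu => (hw u hu).continuousWithinAt
  have hwr : ∀ x ∈ Ico (-T) (-1), HasDerivWithinAt w (f x (w x)) (Ici x) x := by
    intro x hx
    refine (hw x ⟨hx.1, hx.2.le⟩).mono_of_mem_nhdsWithin ?_
    exact mem_of_superset (Icc_mem_nhdsGE hx.2) (Icc_subset_Icc_left hx.1)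
  have hlow : ∀ ⦃u⦄, u ∈ Icc (-T) (-1) → lowB u ≤ w u := by
    refine image_le_of_deriv_right_lt_deriv_boundary'
      (fun u hu => (lowB_deriv hu.2).continuousAt.continuousWithinAt)
      (fun u hu => (lowB_deriv hu.2.le).hasDerivWithinAt) hw0.ge hwc hwr ?_
    intro x hx he
    have := lowB_lt hx.2.le
    simp only [f]
    rw [← he, max_eq_left (hcA x ⟨hx.1, hx.2.le⟩)]
    exact this
  have hupp : ∀ ⦃u⦄, u ∈ Icc (-T) (-1) → w u ≤ uppB u := by
    refine image_le_of_deriv_right_lt_deriv_boundary' hwc hwr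
      (hw0.le.trans (lowB_le_uppB (by linarith)))
      (fun u hu => (uppB_deriv hu.2).continuousAt.continuousWithinAt)
      (fun u hu => (uppB_deriv hu.2.le).hasDerivWithinAt) ?_
    intro x hx he
    have := uppB_lt hx.2.le
    simp only [f]
    rw [he, max_eq_left ((hcA x ⟨hx.1, hx.2.le⟩).trans (lowB_le_uppB hx.2.le))]
    exact this
  refine ⟨w, fun u hu => ?_, fun u hu => ⟨hlow hu, hupp hu⟩⟩
  have := hw u hu
  simp only [f] at this
  rwa [max_eq_left ((hcA u hu).trans (hlow hu))] at this

lemma sq_antitone {D : Set ℝ} (hD : Convex ℝ D) {v w : ℝ → ℝ}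
    (hv : ∀ u ∈ D, HasDerivWithinAt v (1 / v u + 2 * u) D u)
    (hw : ∀ u ∈ D, HasDerivWithinAt w (1 / w u + 2 * u) D u)
    (hv0 : ∀ u ∈ D, 0 < v u) (hw0 : ∀ u ∈ D, 0 < w u) :
    AntitoneOn (fun u => (v u - w u) ^ 2) D := by
  have key : ∀ u ∈ D, HasDerivWithinAt (fun u => (v u - w u) ^ 2)
      (2 * (v u - w u) * (1 / v u - 1 / w u)) D u := by
    intro u hu
    have := ((hv u hu).fun_sub (hw u hu)).fun_pow 2
    refine this.congr_deriv ?_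
    simp
  refine antitoneOn_of_hasDerivWithinAt_nonpos hD (fun u hu => (key u hu).continuousWithinAt)
    (fun u hu => (key u (interior_subset hu)).mono interior_subset) ?_
  intro u hu
  have h1 := hv0 u (interior_subset hu)
  have h2 := hw0 u (interior_subset hu)
  have : 2 * (v u - w u) * (1 / v u - 1 / w u) = - (2 * (v u - w u) ^ 2 / (v u * w u)) := by
    field_simp
    ring
  rw [this]
  have : 0 ≤ 2 * (v u - w u) ^ 2 / (v u * w u) := by positivity
  linarith

lemma pos_of_sol {m : ℝ} (hm : m ≤ -1) {w : ℝ → ℝ}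
    (hw : ∀ u < m, HasDerivAt w (1 / w u + 2 * u) u) : ∀ u < m, 0 < w u := by
  have hc : ContinuousOn w (Iio m) := fun u hu => (hw u hu).continuousAt.continuousWithinAt
  have hne : ∀ a < m, w a ≠ 0 := by
    intro a ha h0
    have hlim : Tendsto (fun u => 2 + 4 * u * w u) (𝓝 a) (𝓝 (2 + 4 * a * w a)) :=
      ((tendsto_id.const_mul 4).mul (hw a ha).continuousAt).const_add 2
    rw [h0] at hlim
    have hev : ∀ᶠ u in 𝓝 a, 0 < 2 + 4 * u * w u := hlim.eventually (lt_mem_nhds (by norm_num))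
    obtain ⟨δ, hδ, hball⟩ := Metric.eventually_nhds_iff.1 hev
    have hmon : MonotoneOn (fun u => w u ^ 2) (Ioc (a - δ) a) := by
      have key : ∀ u ∈ Ioc (a - δ) a, HasDerivAt (fun u => w u ^ 2)
          (2 * w u * (1 / w u + 2 * u)) u := by
        intro u hu
        have := (hw u (hu.2.trans_lt ha)).fun_pow 2
        refine this.congr_deriv ?_
        simp
      refine monotoneOn_of_hasDerivWithinAt_nonneg (convex_Ioc _ _)
        (fun u hu => (key u hu).continuousAt.continuousWithinAt)
        (fun u hu => (key u (interior_subset hu)).hasDerivWithinAt) ?_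
      intro u hu
      have hu' := interior_subset hu
      by_cases hz : w u = 0
      · simp [hz]
      · have h1 : 0 < 2 + 4 * u * w u := by
          apply hball
          rw [Real.dist_eq, abs_lt]
          constructor <;> linarith [hu'.1, hu'.2]
        have : 2 * w u * (1 / w u + 2 * u) = 2 + 4 * u * w u := by
          field_simp
          ring
        rw [this]
        exact h1.le
    have hz : ∀ u ∈ Ioc (a - δ) a, w u = 0 := by
      intro u hu
      have := hmon hu ⟨by linarith, le_rfl⟩ hu.2
      simp only [h0] at this
      have h2 : w u ^ 2 = 0 := le_antisymm (by simpa using this) (sq_nonneg _)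
      simpa using h2
    have hb : a - δ / 2 ∈ Ioo (a - δ) a := by constructor <;> linarith
    have hd : HasDerivAt w 0 (a - δ / 2) := by
      refine (hasDerivAt_const (a - δ / 2) (0 : ℝ)).congr_of_eventuallyEq ?_
      filter_upwards [Ioo_mem_nhds hb.1 hb.2] with u hu
      exact hz u ⟨hu.1, hu.2.le⟩
    have := hd.unique (hw (a - δ / 2) (hb.2.trans ha))
    rw [hz _ ⟨hb.1, hb.2.le⟩] at this
    simp at this
    linarith
  intro b hb
  by_contra hcon
  have hb0 : w b < 0 := lt_of_le_of_ne (not_lt.1 hcon) (hne b hb)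
  have hneg : ∀ u < m, w u < 0 := by
    intro u hu
    by_contra h
    have h0 : (0 : ℝ) ∈ w '' (Iio m) :=
      (isPreconnected_Iio.intermediate_value (show b ∈ Iio m from hb) (show u ∈ Iio m from hu) hc)
        ⟨hb0.le, not_lt.1 h⟩
    obtain ⟨x, hx, hx0⟩ := h0
    exact hne x hx hx0
  have hanti : AntitoneOn (fun u => w u - u ^ 2) (Iio m) := by
    have key : ∀ u ∈ Iio m, HasDerivAt (fun u => w u - u ^ 2) (1 / w u) u := by
      intro u hu
      have := (hw u hu).fun_sub (hasDerivAt_pow 2 u)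
      refine this.congr_deriv ?_
      simp
    refine antitoneOn_of_hasDerivWithinAt_nonpos (convex_Iio _)
        (fun u hu => (key u hu).continuousAt.continuousWithinAt)
        (fun u hu => (key u (interior_subset hu)).hasDerivWithinAt) ?_
    intro u hu
    have hu' : u ∈ Iio m := interior_subset hu
    exact (one_div_neg.2 (hneg u hu')).le
  set v := b - |w b - b ^ 2| - 1 with hv
  have hvb : v ≤ b := by have := abs_nonneg (w b - b ^ 2); linarith
  have h1 := hanti (show v ∈ Iio m from hvb.trans_lt hb) hb hvb
  simp only at h1
  have h2 := hneg v (hvb.trans_lt hb)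
  have h3 := neg_abs_le (w b - b ^ 2)
  nlinarith [abs_nonneg (w b - b ^ 2)]

lemma approx_bound {T : ℝ} (hT : 1 ≤ T) : uppB (-T) - lowB (-T) ≤ 1 / T := by
  rw [uppB_eq]
  have : 1 / T ^ 7 ≤ 1 / T :=
    one_div_le_one_div_of_le (by linarith) (le_self_pow₀ hT (by norm_num))
  linarith

lemma exists_sol : ∃ w : ℝ → ℝ,
    (∀ u < -1, HasDerivAt w (1 / w u + 2 * u) u) ∧
    (∀ u < -1, lowB u ≤ w u ∧ w u ≤ uppB u) := by
  have hT : ∀ n : ℕ, (1 : ℝ) < (n : ℝ) + 2 := fun n => by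
    have : (0 : ℝ) ≤ n := n.cast_nonneg
    linarith
  choose W hWd hWb using fun n : ℕ => exists_approx ((n : ℝ) + 2) (hT n)
  have hcmp : ∀ n k : ℕ, n ≤ k → ∀ u ∈ Icc (-((n : ℝ) + 2)) (-1),
      |W n u - W k u| ≤ 1 / ((n : ℝ) + 2) := by
    intro n k hnk u hu
    have hnk' : (n : ℝ) ≤ k := by exact_mod_cast hnk
    have hsub : Icc (-((n : ℝ) + 2)) (-1) ⊆ Icc (-((k : ℝ) + 2)) (-1) :=
      Icc_subset_Icc_left (by linarith)
    have hl : -((n : ℝ) + 2) ∈ Icc (-((n : ℝ) + 2)) (-1) := ⟨le_rfl, by linarith [hT n]⟩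
    have h := sq_antitone (convex_Icc _ _) (hWd n) (fun x hx => (hWd k x (hsub hx)).mono hsub)
      (fun x hx => (lowB_pos hx.2).trans_le (hWb n x hx).1)
      (fun x hx => (lowB_pos hx.2).trans_le (hWb k x (hsub hx)).1) hl hu hu.1
    simp only at h
    refine (sq_le_sq.1 h).trans ?_
    have h1 := hWb n _ hl
    have h2 := hWb k _ (hsub hl)
    have h3 := approx_bound (hT n).le
    rw [abs_le]
    constructor <;> linarith
  have hinv : Tendsto (fun n : ℕ => 1 / ((n : ℝ) + 2)) atTop (𝓝 0) := by
    simp only [one_div]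
    exact tendsto_inv_atTop_zero.comp
      (tendsto_atTop_add_const_right _ _ tendsto_natCast_atTop_atTop)
  have hin : ∀ u < -1, ∃ N : ℕ, -((N : ℝ) + 2) < u := by
    intro u _
    obtain ⟨N, hN⟩ := exists_nat_gt (-u)
    exact ⟨N, by linarith⟩
  have hlim : ∀ u : ℝ, ∃ l, u < -1 → Tendsto (fun n => W n u) atTop (𝓝 l) := by
    intro u
    by_cases hu : u < -1
    · obtain ⟨N, hN⟩ := hin u hu
      have hca : CauchySeq (fun n => W n u) := by
        rw [Metric.cauchySeq_iff']
        intro ε hε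
        obtain ⟨M, hM⟩ := ((hinv.eventually (gt_mem_nhds hε)).and (eventually_ge_atTop N)).exists
        refine ⟨M, fun n hn => ?_⟩
        rw [dist_comm, Real.dist_eq]
        have : (N : ℝ) ≤ M := by exact_mod_cast hM.2
        exact (hcmp M n hn u ⟨by linarith, hu.le⟩).trans_lt hM.1
      obtain ⟨l, hl⟩ := cauchySeq_tendsto_of_complete hca
      exact ⟨l, fun _ => hl⟩
    · exact ⟨0, fun h => absurd h hu⟩
  choose w hw using hlim
  have hbd : ∀ u < -1, lowB u ≤ w u ∧ w u ≤ uppB u := by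
    intro u hu
    obtain ⟨N, hN⟩ := hin u hu
    have hev : ∀ᶠ n : ℕ in atTop, lowB u ≤ W n u ∧ W n u ≤ uppB u := by
      filter_upwards [eventually_ge_atTop N] with n hn
      have : (N : ℝ) ≤ n := by exact_mod_cast hn
      exact hWb n u ⟨by linarith, hu.le⟩
    exact ⟨ge_of_tendsto (hw u hu) (hev.mono fun _ h => h.1),
      le_of_tendsto (hw u hu) (hev.mono fun _ h => h.2)⟩
  have hrate : ∀ n : ℕ, ∀ u ∈ Ico (-((n : ℝ) + 2)) (-1), |W n u - w u| ≤ 1 / ((n : ℝ) + 2) := by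
    intro n u hu
    refine le_of_tendsto ((hw u hu.2).const_sub (W n u)).abs ?_
    filter_upwards [eventually_ge_atTop n] with k hk
    exact hcmp n k hk u ⟨hu.1, hu.2.le⟩
  refine ⟨w, fun u hu => ?_, hbd⟩
  obtain ⟨N, hN⟩ := hin u hu
  set c : ℝ := 1 / (4 * ((N : ℝ) + 2)) with hc
  have hN0 : (0 : ℝ) < (N : ℝ) + 2 := by linarith [hT N]
  have hc0 : 0 < c := by positivity
  have hcA : ∀ x ∈ Ioo (-((N : ℝ) + 2)) (-1), c ≤ lowB x := by
    intro x hx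
    refine le_trans ?_ (lowB_ge hx.2.le)
    have : 0 < -x := by linarith [hx.2]
    exact one_div_le_one_div_of_le (by positivity) (by linarith [hx.1])
  refine hasDerivAt_of_tendstoUniformlyOn (l := atTop) (f := W)
    (f' := fun n x => 1 / W n x + 2 * x) (g' := fun x => 1 / w x + 2 * x)
    (s := Ioo (-((N : ℝ) + 2)) (-1)) isOpen_Ioo ?_ ?_ (fun x hx => hw x hx.2) ⟨hN, hu⟩
  · rw [Metric.tendstoUniformlyOn_iff]
    intro ε hε
    have : 0 < ε * c ^ 2 := by positivity
    filter_upwards [hinv.eventually (gt_mem_nhds this), eventually_ge_atTop N] with n hn hnN x hx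
    have hnN' : (N : ℝ) ≤ n := by exact_mod_cast hnN
    have h1 : c ≤ w x := (hcA x hx).trans (hbd x hx.2).1
    have h2 : c ≤ W n x := (hcA x hx).trans (hWb n x ⟨by linarith [hx.1], hx.2.le⟩).1
    have h3 := hrate n x ⟨by linarith [hx.1], hx.2⟩
    have p1 : 0 < w x := hc0.trans_le h1
    have p2 : 0 < W n x := hc0.trans_le h2
    have e : 1 / w x + 2 * x - (1 / W n x + 2 * x) = (W n x - w x) / (w x * W n x) := by
      field_simp
      ring
    rw [Real.dist_eq, e, abs_div, abs_of_pos (mul_pos p1 p2), div_lt_iff₀ (mul_pos p1 p2)]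
    have h4 : c ^ 2 ≤ w x * W n x := by
      rw [sq]; exact mul_le_mul h1 h2 hc0.le p1.le
    have h5 : ε * c ^ 2 ≤ ε * (w x * W n x) := mul_le_mul_of_nonneg_left h4 hε.le
    linarith
  · filter_upwards [eventually_ge_atTop N] with n hnN x hx
    have hnN' : (N : ℝ) ≤ n := by exact_mod_cast hnN
    exact (hWd n x ⟨by linarith [hx.1], hx.2.le⟩).hasDerivAt
      (Icc_mem_nhds (by linarith [hx.1]) hx.2)

lemma bounds_tendsto {w : ℝ → ℝ} (hb : ∀ u < -1, lowB u ≤ w u ∧ w u ≤ uppB u) :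
    Tendsto w atBot (𝓝 0) := by
  have hinv : Tendsto (fun u : ℝ => 2 * (-u)⁻¹) atBot (𝓝 0) := by
    simpa using (tendsto_inv_atTop_zero.comp tendsto_neg_atBot_atTop).const_mul (2 : ℝ)
  refine tendsto_of_tendsto_of_tendsto_of_le_of_le' tendsto_const_nhds hinv ?_ ?_
  · filter_upwards [eventually_lt_atBot (-1)] with u hu
    exact (lowB_pos hu.le).le.trans (hb u hu).1
  · filter_upwards [eventually_lt_atBot (-1)] with u hu
    refine (hb u hu).2.trans ?_
    obtain ⟨s, rfl⟩ : ∃ s, u = -s := ⟨-u, by ring⟩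
    have hs : 1 ≤ s := by linarith
    have h := approx_bound hs
    have h1 : lowB (-s) ≤ 1 / s := by
      have e : 1 / s - lowB (-s) = 1 / (2 * s) + 1 / (8 * s ^ 4) := by
        unfold lowB
        have : s ≠ 0 := by linarith
        field_simp
        ring
      have : 0 < 1 / (2 * s) + 1 / (8 * s ^ 4) := by positivity
      linarith
    rw [neg_neg, ← one_div]
    linarith

/-- The Riccati-type inner equation dη/du = 1/(η + u²) has a unique solution
defined on an interval (-∞, u₁) approaching the parabola η = -u² as u → -∞,
with the asymptotic expansion η(u) = -u² - 1/(2u) - 1/(8u⁴) + O(1/u⁷). -/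
theorem stmt5 : ∃ (u₁ : ℝ) (η : ℝ → ℝ),
    (∀ u < u₁, HasDerivAt η (1 / (η u + u ^ 2)) u ∧ 0 < η u + u ^ 2) ∧
    Filter.Tendsto (fun u => η u + u ^ 2) Filter.atBot (nhds 0) ∧
    (∃ C R : ℝ, 0 < C ∧ 0 < R ∧ ∀ u ≤ -R,
      |η u - (-u ^ 2 - 1/(2*u) - 1/(8*u ^ 4))| ≤ C / |u| ^ 7) ∧
    (∀ (u₁' : ℝ) (η' : ℝ → ℝ),
      (∀ u < u₁', HasDerivAt η' (1 / (η' u + u ^ 2)) u) →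
      Filter.Tendsto (fun u => η' u + u ^ 2) Filter.atBot (nhds 0) →
      ∀ u < min u₁ u₁', η' u = η u) := by
  obtain ⟨w, hw, hb⟩ := exists_sol
  have hpos : ∀ u < -1, 0 < w u := fun u hu => (lowB_pos hu.le).trans_le (hb u hu).1
  refine ⟨-1, fun u => w u - u ^ 2, ?_, ?_, ⟨1, 2, one_pos, two_pos, ?_⟩, ?_⟩
  · intro u hu
    simp only [sub_add_cancel]
    refine ⟨?_, hpos u hu⟩
    have := (hw u hu).fun_sub (hasDerivAt_pow 2 u)
    refine this.congr_deriv ?_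
    simp
  · simp only [sub_add_cancel]
    exact bounds_tendsto hb
  · intro u hu
    have h := hb u (by linarith)
    have e : w u - u ^ 2 - (-u ^ 2 - 1 / (2 * u) - 1 / (8 * u ^ 4)) = w u - lowB u := by
      unfold lowB
      ring
    rw [e, abs_of_nonneg (by linarith), abs_of_neg (by linarith)]
    have h2 := uppB_eq (-u)
    rw [neg_neg] at h2
    linarith
  · intro u₁' η' h' hlim u hu
    set m := min (-1) u₁' with hm
    have hm1 : m ≤ -1 := min_le_left _ _
    have hd : ∀ x < m, HasDerivAt (fun x => η' x + x ^ 2) (1 / (η' x + x ^ 2) + 2 * x) x := by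
      intro x hx
      have := (h' x (hx.trans_le (min_le_right _ _))).fun_add (hasDerivAt_pow 2 x)
      refine this.congr_deriv ?_
      simp
    have hp := pos_of_sol hm1 hd
    have hanti := sq_antitone (convex_Iio m) (fun x hx => (hd x hx).hasDerivWithinAt)
      (fun x hx => (hw x (lt_of_lt_of_le hx hm1)).hasDerivWithinAt) hp
      (fun x hx => hpos x (lt_of_lt_of_le hx hm1))
    have hl : Tendsto (fun x => (η' x + x ^ 2 - w x) ^ 2) atBot (𝓝 0) := by
      simpa using (hlim.sub (bounds_tendsto hb)).pow 2
    have hle : (η' u + u ^ 2 - w u) ^ 2 ≤ 0 := by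
      refine ge_of_tendsto hl ?_
      filter_upwards [eventually_le_atBot u] with x hx
      exact hanti (show x ∈ Iio m from hx.trans_lt hu) hu hx
    have h0 : η' u + u ^ 2 - w u = 0 := by
      have := le_antisymm hle (sq_nonneg _)
      simpa using this
    linarith
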